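/- arXiv:2201.03089 — 2 statements merged into one kernel-verified Lean document; each statement's English description precedes it below -/
import Mathlib

section
/- Let M be a finite ordinal monoid with merge and let A ⊆ M. Then Closgp(A) = A·Closgs(A) = Closgs(A)·A, and Closgordp(A) = A·Closgord(A), where juxtaposition of subsets denotes the pointwise product {a·b : a ∈ A, b ∈ B}. -/
open Pointwise

/-- `closgp mrg A`: least subset containing `A`, closed under multiplication and `mrg`. -/
def closgp {M : Type*} [Monoid M] (mrg : M → M) (A : Set M) : Set M :=
  ⋂₀ {S : Set M | A ⊆ S ∧ (∀ x ∈ S, ∀ y ∈ S, x * y ∈ S) ∧ ∀ x ∈ S, mrg x ∈ S}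

/-- `closgs mrg A = closgp mrg A ∪ {1}`. -/
def closgs {M : Type*} [Monoid M] (mrg : M → M) (A : Set M) : Set M :=
  closgp mrg A ∪ {1}

/-- `closgordp mrg om A`: least subset containing `A`, closed under
multiplication, `mrg` and `om`. -/
def closgordp {M : Type*} [Monoid M] (mrg om : M → M) (A : Set M) : Set M :=
  ⋂₀ {S : Set M | A ⊆ S ∧ (∀ x ∈ S, ∀ y ∈ S, x * y ∈ S) ∧
      (∀ x ∈ S, mrg x ∈ S) ∧ ∀ x ∈ S, om x ∈ S}

/-- `closgord mrg om A`: least subset containing `A ∪ {1}`, closed under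
multiplication, `mrg` and `om`. -/
def closgord {M : Type*} [Monoid M] (mrg om : M → M) (A : Set M) : Set M :=
  ⋂₀ {S : Set M | A ∪ {1} ⊆ S ∧ (∀ x ∈ S, ∀ y ∈ S, x * y ∈ S) ∧
      (∀ x ∈ S, mrg x ∈ S) ∧ ∀ x ∈ S, om x ∈ S}

section Closure

variable {M : Type*} [Monoid M] {mrg om : M → M} {A S : Set M} {x y : M}

theorem subset_closgp : A ⊆ closgp mrg A :=
  fun _ hx _ hS => hS.1 hx

theorem mul_mem_closgp (hx : x ∈ closgp mrg A) (hy : y ∈ closgp mrg A) :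
    x * y ∈ closgp mrg A :=
  fun S hS => hS.2.1 _ (hx S hS) _ (hy S hS)

theorem mrg_mem_closgp (hx : x ∈ closgp mrg A) : mrg x ∈ closgp mrg A :=
  fun S hS => hS.2.2 _ (hx S hS)

theorem closgp_subset (hA : A ⊆ S) (hmul : ∀ x ∈ S, ∀ y ∈ S, x * y ∈ S)
    (hmrg : ∀ x ∈ S, mrg x ∈ S) : closgp mrg A ⊆ S :=
  fun _ hx => hx S ⟨hA, hmul, hmrg⟩

theorem mul_mem_closgp_of_mem_closgs (hx : x ∈ closgp mrg A) (hy : y ∈ closgs mrg A) :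
    x * y ∈ closgp mrg A := by
  rcases hy with hy | rfl
  · exact mul_mem_closgp hx hy
  · rwa [mul_one]

theorem mul_mem_closgp_of_closgs_mem (hx : x ∈ closgs mrg A) (hy : y ∈ closgp mrg A) :
    x * y ∈ closgp mrg A := by
  rcases hx with hx | rfl
  · exact mul_mem_closgp hx hy
  · rwa [one_mul]

theorem closgp_eq_mul_closgs (hconj : ∀ a b : M, mrg (a * b) = a * mrg (b * a) * b) :
    closgp mrg A = A * closgs mrg A := by
  have hsub : A * closgs mrg A ⊆ closgp mrg A := by
    rintro _ ⟨a, ha, s, hs, rfl⟩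
    exact mul_mem_closgp_of_mem_closgs (subset_closgp ha) hs
  refine (closgp_subset ?_ ?_ ?_).antisymm hsub
  · exact fun a ha => ⟨a, ha, 1, Or.inr rfl, mul_one a⟩
  · rintro _ ⟨a, ha, s, hs, rfl⟩ y hy
    exact ⟨a, ha, s * y, Or.inl (mul_mem_closgp_of_closgs_mem hs (hsub hy)),
      (mul_assoc a s y).symm⟩
  · rintro _ ⟨a, ha, s, hs, rfl⟩
    have hsa := mrg_mem_closgp (mul_mem_closgp_of_closgs_mem hs (subset_closgp ha))
    exact ⟨a, ha, mrg (s * a) * s, Or.inl (mul_mem_closgp_of_mem_closgs hsa hs),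
      by simp only [hconj a s, mul_assoc]⟩

theorem closgp_eq_closgs_mul (hconj : ∀ a b : M, mrg (a * b) = a * mrg (b * a) * b) :
    closgp mrg A = closgs mrg A * A := by
  have hsub : closgs mrg A * A ⊆ closgp mrg A := by
    rintro _ ⟨s, hs, a, ha, rfl⟩
    exact mul_mem_closgp_of_closgs_mem hs (subset_closgp ha)
  refine (closgp_subset ?_ ?_ ?_).antisymm hsub
  · exact fun a ha => ⟨1, Or.inr rfl, a, ha, one_mul a⟩
  · rintro x hx _ ⟨s, hs, a, ha, rfl⟩
    exact ⟨x * s, Or.inl (mul_mem_closgp_of_mem_closgs (hsub hx) hs), a, ha,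
      mul_assoc x s a⟩
  · rintro _ ⟨s, hs, a, ha, rfl⟩
    have has := mrg_mem_closgp (mul_mem_closgp_of_mem_closgs (subset_closgp ha) hs)
    exact ⟨s * mrg (a * s), Or.inl (mul_mem_closgp_of_closgs_mem hs has), a, ha,
      (hconj s a).symm⟩

theorem subset_closgordp : A ⊆ closgordp mrg om A :=
  fun _ hx _ hS => hS.1 hx

theorem mul_mem_closgordp (hx : x ∈ closgordp mrg om A) (hy : y ∈ closgordp mrg om A) :
    x * y ∈ closgordp mrg om A :=
  fun S hS => hS.2.1 _ (hx S hS) _ (hy S hS)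

theorem mrg_mem_closgordp (hx : x ∈ closgordp mrg om A) : mrg x ∈ closgordp mrg om A :=
  fun S hS => hS.2.2.1 _ (hx S hS)

theorem om_mem_closgordp (hx : x ∈ closgordp mrg om A) : om x ∈ closgordp mrg om A :=
  fun S hS => hS.2.2.2 _ (hx S hS)

theorem subset_closgord : A ⊆ closgord mrg om A :=
  fun _ hx _ hS => hS.1 (Or.inl hx)

theorem one_mem_closgord : 1 ∈ closgord mrg om A :=
  fun _ hS => hS.1 (Or.inr rfl)

theorem mul_mem_closgord (hx : x ∈ closgord mrg om A) (hy : y ∈ closgord mrg om A) :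
    x * y ∈ closgord mrg om A :=
  fun S hS => hS.2.1 _ (hx S hS) _ (hy S hS)

theorem mrg_mem_closgord (hx : x ∈ closgord mrg om A) : mrg x ∈ closgord mrg om A :=
  fun S hS => hS.2.2.1 _ (hx S hS)

theorem om_mem_closgord (hx : x ∈ closgord mrg om A) : om x ∈ closgord mrg om A :=
  fun S hS => hS.2.2.2 _ (hx S hS)

theorem closgord_subset_closgordp_union_one (hmrg : mrg 1 = 1) (hom : om 1 = 1) :
    closgord mrg om A ⊆ closgordp mrg om A ∪ {1} := by
  refine fun x hx => hx _ ⟨Set.union_subset_union_left _ subset_closgordp, ?_, ?_, ?_⟩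
  · rintro x (hx | rfl) y (hy | rfl)
    · exact Or.inl (mul_mem_closgordp hx hy)
    · exact Or.inl (by rwa [mul_one])
    · exact Or.inl (by rwa [one_mul])
    · exact Or.inr (mul_one 1)
  · rintro x (hx | rfl)
    · exact Or.inl (mrg_mem_closgordp hx)
    · exact Or.inr hmrg
  · rintro x (hx | rfl)
    · exact Or.inl (om_mem_closgordp hx)
    · exact Or.inr hom

theorem closgordp_eq_mul_closgord (hmrg : mrg 1 = 1) (hom : om 1 = 1)
    (hconj : ∀ a b : M, mrg (a * b) = a * mrg (b * a) * b)
    (hommul : ∀ a b : M, om (a * b) = a * om (b * a)) :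
    closgordp mrg om A = A * closgord mrg om A := by
  apply Set.Subset.antisymm
  · refine fun x hx => hx _ ⟨?_, ?_, ?_, ?_⟩
    · exact fun a ha => ⟨a, ha, 1, one_mem_closgord, mul_one a⟩
    · rintro _ ⟨a, ha, s, hs, rfl⟩ _ ⟨b, hb, t, ht, rfl⟩
      exact ⟨a, ha, s * (b * t),
        mul_mem_closgord hs (mul_mem_closgord (subset_closgord hb) ht),
        (mul_assoc a s (b * t)).symm⟩
    · rintro _ ⟨a, ha, s, hs, rfl⟩
      have hsa := mrg_mem_closgord (mul_mem_closgord hs (subset_closgord ha))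
      exact ⟨a, ha, mrg (s * a) * s, mul_mem_closgord hsa hs,
        by simp only [hconj a s, mul_assoc]⟩
    · rintro _ ⟨a, ha, s, hs, rfl⟩
      exact ⟨a, ha, om (s * a),
        om_mem_closgord (mul_mem_closgord hs (subset_closgord ha)), (hommul a s).symm⟩
  · rintro _ ⟨a, ha, s, hs, rfl⟩
    rcases closgord_subset_closgordp_union_one hmrg hom hs with hs | rfl
    · exact mul_mem_closgordp (subset_closgordp ha) hs
    · simpa only [mul_one] using subset_closgordp ha

end Closure

theorem stmt2 {M : Type*} [Monoid M] [Fintype M] [PartialOrder M]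
    (hmulmono : ∀ a b c d : M, a ≤ b → c ≤ d → a * c ≤ b * d)
    (mrg : M → M)
    (hmrgmono : ∀ a b : M, a ≤ b → mrg a ≤ mrg b)
    (hmrgidem : ∀ e : M, e * e = e → mrg e = e)
    (hmrgmul : ∀ a : M, mrg a * mrg a = mrg a)
    (hmrgmrg : ∀ a : M, mrg (mrg a) = mrg a)
    (hmrgconj : ∀ a b : M, mrg (a * b) = a * mrg (b * a) * b)
    (hmrgpow : ∀ a : M, ∃ N : ℕ, ∀ m : ℕ, N ≤ m → a ^ m ≤ mrg a)
    (om : M → M)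
    (homono : ∀ a b : M, a ≤ b → om a ≤ om b)
    (hom1 : om 1 = 1)
    (hompow : ∀ x : M, ∀ n : ℕ, 1 ≤ n → om (x ^ n) = om x)
    (hommul : ∀ x y : M, om (x * y) = x * om (y * x))
    (A : Set M) :
    closgp mrg A = A * closgs mrg A ∧
    closgp mrg A = closgs mrg A * A ∧
    closgordp mrg om A = A * closgord mrg om A := by
  exact ⟨closgp_eq_mul_closgs hmrgconj, closgp_eq_closgs_mul hmrgconj,
    closgordp_eq_mul_closgord (hmrgidem 1 (mul_one 1)) hom1 hmrgconj hommul⟩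
end

section
/- Let M be a finite monoid. Then the powerset of M, equipped with the pointwise product, the unit {1}, the inclusion order, and the operation K as merge, satisfies all the axioms of a finite ordered monoid with merge; explicitly: the pointwise product is monotone for inclusion in both arguments; K is inclusion-monotone; K(E) = E for every E ⊆ M with E·E = E; K(A)·K(A) = K(A) and K(K(A)) = K(A) for every A ⊆ M; K(A·B) = A·K(B·A)·B for all A, B ⊆ M; and for every A ⊆ M there exists N ∈ ℕ such that A^m ⊆ K(A) for all m ≥ N. -/
open Pointwise

/-- The merge of a subset `A` of a monoid: `K(A) = ⋂_{n≥1} ⋃_{m≥n} A^m`,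
where `A^m` is the `m`-fold pointwise product. -/
def mergeSet {M : Type*} [Monoid M] (A : Set M) : Set M :=
  ⋂ (n : ℕ) (_ : 1 ≤ n), ⋃ (m : ℕ) (_ : n ≤ m), A ^ m

theorem mem_mergeSet {M : Type*} [Monoid M] {A : Set M} {x : M} :
    x ∈ mergeSet A ↔ ∀ n : ℕ, ∃ m, n ≤ m ∧ x ∈ A ^ m := by
  simp only [mergeSet, Set.mem_iInter, Set.mem_iUnion, exists_prop]
  refine ⟨fun h n => ?_, fun h n _ => h n⟩
  obtain ⟨m, hm, hx⟩ := h (n + 1) (by lia)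
  exact ⟨m, by lia, hx⟩

theorem mergeSet_mono {M : Type*} [Monoid M] {A B : Set M} (h : A ⊆ B) :
    mergeSet A ⊆ mergeSet B := by
  intro x hx
  rw [mem_mergeSet] at hx ⊢
  intro n
  obtain ⟨m, hm, hxm⟩ := hx n
  exact ⟨m, hm, Set.pow_subset_pow_left h hxm⟩

theorem mergeSet_eq_self_of_mul_self {M : Type*} [Monoid M] {E : Set M} (hE : E * E = E) :
    mergeSet E = E := by
  have hpow : ∀ m : ℕ, E ^ (m + 1) = E := fun m => IsIdempotentElem.pow_succ_eq m hE
  ext x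
  rw [mem_mergeSet]
  constructor
  · intro h
    obtain ⟨m, hm, hx⟩ := h 1
    obtain ⟨k, rfl⟩ := Nat.exists_eq_add_of_le' hm
    rwa [hpow] at hx
  · exact fun hx n => ⟨n + 1, by lia, by rwa [hpow]⟩

/-- In a finite monoid the sequence of powers of `A` is eventually periodic, so all
sufficiently large powers are contained in the merge. -/
theorem exists_forall_pow_subset_mergeSet {M : Type*} [Monoid M] [Finite M] (A : Set M) :
    ∃ N : ℕ, ∀ m : ℕ, N ≤ m → A ^ m ⊆ mergeSet A := by
  obtain ⟨i, j, hij, h⟩ : ∃ i j : ℕ, i < j ∧ A ^ i = A ^ j := by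
    obtain ⟨i, j, hne, h⟩ := Finite.exists_ne_map_eq_of_infinite (fun n : ℕ => A ^ n)
    rcases hne.lt_or_gt with hlt | hlt
    · exact ⟨i, j, hlt, h⟩
    · exact ⟨j, i, hlt, h.symm⟩
  obtain ⟨d, rfl⟩ := Nat.exists_eq_add_of_lt hij
  refine ⟨i, fun m hm x hx => mem_mergeSet.2 fun n => ?_⟩
  have period : ∀ k : ℕ, A ^ (m + k * (d + 1)) = A ^ m := by
    intro k
    induction k with
    | zero => simp
    | succ k ih =>
      obtain ⟨c, rfl⟩ := Nat.exists_eq_add_of_le hm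
      rw [← ih, show i + c + (k + 1) * (d + 1) = i + d + 1 + (c + k * (d + 1)) by ring,
        pow_add, ← h, ← pow_add, add_assoc]
  exact ⟨m + n * (d + 1), by nlinarith, by rwa [period]⟩

theorem mergeSet_mul_self {M : Type*} [Monoid M] [Finite M] (A : Set M) :
    mergeSet A * mergeSet A = mergeSet A := by
  apply Set.Subset.antisymm
  · rintro _ ⟨x, hx, y, hy, rfl⟩
    refine mem_mergeSet.2 fun n => ?_
    obtain ⟨k, hk, hxk⟩ := mem_mergeSet.1 hx n
    obtain ⟨l, -, hyl⟩ := mem_mergeSet.1 hy 0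
    exact ⟨k + l, by lia, pow_add A k l ▸ Set.mul_mem_mul hxk hyl⟩
  · intro x hx
    obtain ⟨N, hN⟩ := exists_forall_pow_subset_mergeSet A
    obtain ⟨m, hm, hxm⟩ := mem_mergeSet.1 hx (N + N)
    obtain ⟨c, rfl⟩ := Nat.exists_eq_add_of_le hm
    rw [add_assoc, pow_add] at hxm
    exact Set.mul_subset_mul (hN N le_rfl) (hN (N + c) (by lia)) hxm

theorem mergeSet_mul {M : Type*} [Monoid M] [Finite M] (A B : Set M) :
    mergeSet (A * B) = A * mergeSet (B * A) * B := by
  have hpow : ∀ m : ℕ, (A * B) ^ (m + 1) = A * (B * A) ^ m * B := fun m => by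
    rw [pow_succ, ← mul_assoc, mul_pow_mul]
  apply Set.Subset.antisymm
  · intro x hx
    obtain ⟨N, hN⟩ := exists_forall_pow_subset_mergeSet (B * A)
    obtain ⟨m, hm, hxm⟩ := mem_mergeSet.1 hx (N + 1)
    obtain ⟨c, rfl⟩ := Nat.exists_eq_add_of_le hm
    rw [add_right_comm, hpow] at hxm
    exact Set.mul_subset_mul_right (Set.mul_subset_mul_left (hN (N + c) (by lia))) hxm
  · rintro _ ⟨_, ⟨a, ha, y, hy, rfl⟩, b, hb, rfl⟩
    refine mem_mergeSet.2 fun n => ?_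
    obtain ⟨m, hm, hym⟩ := mem_mergeSet.1 hy n
    exact ⟨m + 1, by lia, hpow m ▸ Set.mul_mem_mul (Set.mul_mem_mul ha hym) hb⟩

/-- The powerset of a finite monoid, with pointwise product, unit `{1}`,
inclusion order and the merge operation `K`, satisfies all the axioms of a
finite ordered monoid with merge. -/
theorem stmt10 {M : Type*} [Monoid M] [Fintype M] :
    (∀ A B C D : Set M, A ⊆ B → C ⊆ D → A * C ⊆ B * D) ∧
    (∀ A B : Set M, A ⊆ B → mergeSet A ⊆ mergeSet B) ∧
    (∀ E : Set M, E * E = E → mergeSet E = E) ∧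
    (∀ A : Set M, mergeSet A * mergeSet A = mergeSet A) ∧
    (∀ A : Set M, mergeSet (mergeSet A) = mergeSet A) ∧
    (∀ A B : Set M, mergeSet (A * B) = A * mergeSet (B * A) * B) ∧
    (∀ A : Set M, ∃ N : ℕ, ∀ m : ℕ, N ≤ m → A ^ m ⊆ mergeSet A) := by
  exact ⟨fun _ _ _ _ => Set.mul_subset_mul, fun _ _ => mergeSet_mono,
    fun _ => mergeSet_eq_self_of_mul_self, mergeSet_mul_self,
    fun A => mergeSet_eq_self_of_mul_self (mergeSet_mul_self A), mergeSet_mul,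
    exists_forall_pow_subset_mergeSet⟩
end
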